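/- arXiv:2303.10706 — 2 statements merged into one kernel-verified Lean document; each statement's English description precedes it below -/
import Mathlib

section
/- Let X be a finite set of points in ℝ^d, let c be the center of the smallest-radius closed ball containing X (the unique global minimum point of x ↦ max_{a ∈ X} ‖x − a‖), and let T be a max-sum tree of X. Then for every edge pq of T one has ⟨p − c, q − c⟩ ≤ 0; equivalently, c lies in the closed ball B(pq) with diameter pq. -/
/-!
Put `c` at the origin and let `R` be the radius of the smallest enclosing ball. Two facts carry
the proof.

* Geometry: `c` is a convex combination of the points of `X` at distance exactly `R` from `c`
  (`center_mem_convexHull`). Otherwise a hyperplane separates `c` from these points, and moving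
  `c` slightly towards them yields a smaller enclosing ball.
* Combinatorics: deleting the edge `pq` splits `T` into a side `P ∋ p` and a side `Q ∋ q`; for
  `a ∈ P`, `b ∈ Q`, replacing `pq` by `ab` gives a tree again, so maximality yields
  `‖a - b‖ ≤ ‖p - q‖` (`dist_le_of_maxSum`).

Suppose `⟨p, q⟩ > 0`. Then `‖p - q‖² < ‖p‖² + ‖q‖² ≤ 2R²`, so for extremal points `a ∈ P`,
`b ∈ Q` (at distance `R`) the exchange inequality forces `⟨a, b⟩ > 0`, and in the same way
`⟨a, q⟩ > 0` and `⟨p, b⟩ > 0`. Write `0 = u + v`, where `u` and `v` collect the terms of the convex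
combination from `P` and `Q`. Then `0 ≤ ⟨u, v⟩ = -‖u‖²`, hence `u = v = 0`; pairing `u` with `q`
and `v` with `p` shows that all weights vanish, which is absurd (`inner_nonpos_of_split`).
-/

open scoped RealInnerProductSpace

/-- The cost of a graph whose vertices are (labelled by) points in `ℝ^d`:
the sum of Euclidean distances between the pairs of vertices joined by an edge. -/
noncomputable def graphCost {d : ℕ} {V : Type} [Fintype V]
    (p : V → EuclideanSpace ℝ (Fin d)) (G : SimpleGraph V) : ℝ :=
  ∑ e ∈ (Set.toFinite G.edgeSet).toFinset,
    Sym2.lift ⟨fun x y => dist (p x) (p y), fun _ _ => dist_comm _ _⟩ e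

/-- First-order improvement of a center: if `y` has positive inner product with every point `a - c`
for which `‖c - a‖ = R`, then some small step from `c` along `y` brings all of `X` to
distance less than `R`. -/
lemma exists_smaller_ball {E : Type*} [NormedAddCommGroup E] [InnerProductSpace ℝ E]
    (X : Finset E) (c y : E) (R : ℝ) (hR : ∀ a ∈ X, ‖c - a‖ ≤ R)
    (hy : ∀ a ∈ X, ‖c - a‖ = R → 0 < ⟪y, a - c⟫) :
    ∃ x : E, ∀ a ∈ X, ‖x - a‖ < R := by
  have key : ∀ᶠ t : ℝ in nhdsWithin 0 (Set.Ioi 0), ∀ a ∈ X, ‖c + t • y - a‖ < R := by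
    rw [Filter.eventually_all_finset]
    intro a ha
    rcases (hR a ha).lt_or_eq with h | h
    · have hcont : Continuous fun t : ℝ => ‖c + t • y - a‖ := by fun_prop
      have h0 : ‖c + (0 : ℝ) • y - a‖ < R := by simpa using h
      exact (hcont.continuousAt.eventually_lt continuousAt_const h0).filter_mono
        nhdsWithin_le_nhds
    · have hpos := hy a ha h
      have hR0 : 0 ≤ R := h ▸ norm_nonneg _
      -- `‖c + t y - a‖² - R² = t (t ‖y‖² - 2 ⟪y, a - c⟫)`, negative for small `t > 0`.
      have hcont : Continuous fun t : ℝ => t * ‖y‖ ^ 2 := by fun_prop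
      have h0 : (0 : ℝ) * ‖y‖ ^ 2 < 2 * ⟪y, a - c⟫ := by linarith
      filter_upwards [(hcont.continuousAt.eventually_lt continuousAt_const h0).filter_mono
        nhdsWithin_le_nhds, self_mem_nhdsWithin] with t ht ht0
      have ht0 : 0 < t := ht0
      have e : ‖c + t • y - a‖ ^ 2 = R ^ 2 + t * (t * ‖y‖ ^ 2 - 2 * ⟪y, a - c⟫) := by
        have : c + t • y - a = t • y - (a - c) := by abel
        rw [this, norm_sub_sq_real, inner_smul_left, norm_smul, norm_sub_rev a c, h]
        simp only [Real.norm_eq_abs, mul_pow, sq_abs, conj_trivial]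
        ring
      refine lt_of_pow_lt_pow_left₀ 2 hR0 ?_
      have := mul_pos ht0 (sub_pos.2 ht)
      nlinarith
  obtain ⟨t, ht⟩ := key.exists
  exact ⟨_, ht⟩

/-- The center of the smallest enclosing ball lies in the convex hull of the points of `X` on the
boundary of the ball. -/
lemma center_mem_convexHull {E : Type*} [NormedAddCommGroup E] [InnerProductSpace ℝ E]
    [CompleteSpace E] (X : Finset E) (hX : X.Nonempty) (c : E)
    (hc : ∀ x : E, X.sup' hX (fun a => ‖c - a‖) ≤ X.sup' hX (fun a => ‖x - a‖)) :
    c ∈ convexHull ℝ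
      ((X.filter fun a => ‖c - a‖ = X.sup' hX (fun a => ‖c - a‖) : Finset E) : Set E) := by
  classical
  by_contra hcon
  obtain ⟨f, u, hfu, hu⟩ := geometric_hahn_banach_point_closed (convex_convexHull ℝ _)
    ((Finset.finite_toSet _).isClosed_convexHull ℝ) hcon
  obtain ⟨x, hx⟩ := exists_smaller_ball X c ((InnerProductSpace.toDual ℝ E).symm f)
    (X.sup' hX (fun a => ‖c - a‖)) (fun a ha => Finset.le_sup' (fun a => ‖c - a‖) ha) (by
      intro a ha hac
      rw [InnerProductSpace.toDual_symm_apply, map_sub]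
      have := hu a (subset_convexHull ℝ _ (by simpa using ⟨ha, hac⟩))
      linarith)
  exact absurd (hc x) (not_le.2 ((Finset.sup'_lt_iff hX).2 hx))

/-- The geometric core: `c` is a convex combination of points of a sphere around `c`, the
points are split into two classes by `P`, the points `p` and `q` lie in the ball, and `‖p - q‖`
bounds all distances across the two classes when `p` is added to the class `P` and `q` to the
other one. -/
lemma inner_nonpos_of_split {E : Type*} [NormedAddCommGroup E] [InnerProductSpace ℝ E]
    (S : Finset E) (c p q : E) (R : ℝ) (hS : ∀ a ∈ S, ‖a - c‖ = R)
    (hc : c ∈ convexHull ℝ (S : Set E)) (hp : ‖p - c‖ ≤ R) (hq : ‖q - c‖ ≤ R) (P : E → Prop)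
    (hab : ∀ a ∈ S, P a → ∀ b ∈ S, ¬ P b → ‖a - b‖ ≤ ‖p - q‖)
    (haq : ∀ a ∈ S, P a → ‖a - q‖ ≤ ‖p - q‖)
    (hpb : ∀ b ∈ S, ¬ P b → ‖p - b‖ ≤ ‖p - q‖) :
    ⟪p - c, q - c⟫ ≤ 0 := by
  classical
  by_contra! hpos
  have pos : ∀ x y : E, ‖p - c‖ ≤ ‖x - c‖ → ‖q - c‖ ≤ ‖y - c‖ → ‖x - y‖ ≤ ‖p - q‖ →
      0 < ⟪x - c, y - c⟫ := by
    intro x y hx hy hxy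
    have e1 := norm_sub_sq_real (x - c) (y - c)
    have e2 := norm_sub_sq_real (p - c) (q - c)
    rw [sub_sub_sub_cancel_right] at e1 e2
    have h1 := pow_le_pow_left₀ (norm_nonneg _) hx 2
    have h2 := pow_le_pow_left₀ (norm_nonneg _) hy 2
    have h3 := pow_le_pow_left₀ (norm_nonneg _) hxy 2
    linarith
  obtain ⟨w, hw0, hw1, hwc⟩ := Finset.mem_convexHull'.1 hc
  have hsum : ∑ a ∈ S, w a • (a - c) = 0 := by
    simp only [smul_sub, Finset.sum_sub_distrib, ← Finset.sum_smul]
    rw [hwc, hw1, one_smul, sub_self]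
  set A := S.filter P with hA
  set B := S.filter (fun a => ¬ P a) with hB
  have huv : ∑ a ∈ A, w a • (a - c) + ∑ b ∈ B, w b • (b - c) = 0 := by
    rw [hA, hB, Finset.sum_filter_add_sum_filter_not, hsum]
  have hinner : 0 ≤ ⟪∑ a ∈ A, w a • (a - c), ∑ b ∈ B, w b • (b - c)⟫ := by
    simp only [sum_inner, inner_sum, inner_smul_left, inner_smul_right, conj_trivial,
      Finset.mul_sum]
    refine Finset.sum_nonneg fun b hb => Finset.sum_nonneg fun a ha => ?_
    rw [hA, Finset.mem_filter] at ha
    rw [hB, Finset.mem_filter] at hb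
    have := pos a b (by rwa [hS a ha.1]) (by rwa [hS b hb.1]) (hab a ha.1 ha.2 b hb.1 hb.2)
    exact mul_nonneg (hw0 b hb.1) (mul_nonneg (hw0 a ha.1) this.le)
  have hv : ∑ b ∈ B, w b • (b - c) = -∑ a ∈ A, w a • (a - c) := eq_neg_of_add_eq_zero_right huv
  have hu0 : ∑ a ∈ A, w a • (a - c) = 0 := by
    rw [hv, inner_neg_right, real_inner_self_eq_norm_sq] at hinner
    have : ‖∑ a ∈ A, w a • (a - c)‖ ^ 2 = 0 :=
      le_antisymm (by linarith) (sq_nonneg _)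
    simpa using this
  have hv0 : ∑ b ∈ B, w b • (b - c) = 0 := by rw [hv, hu0, neg_zero]
  -- A vanishing combination of vectors on the positive side of a hyperplane has zero weights.
  have weights : ∀ (D : Finset E) (z : E), (∀ a ∈ D, 0 ≤ w a) → (∀ a ∈ D, 0 < ⟪a - c, z⟫) →
      ∑ a ∈ D, w a • (a - c) = 0 → ∀ a ∈ D, w a = 0 := by
    intro D z hD hz h0 a ha
    have h := congrArg (fun x => ⟪x, z⟫) h0
    simp only [sum_inner, inner_smul_left, conj_trivial, inner_zero_left] at h
    have := (Finset.sum_eq_zero_iff_of_nonneg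
      (fun a ha => mul_nonneg (hD a ha) (hz a ha).le)).1 h a ha
    exact (mul_eq_zero.1 this).resolve_right (hz a ha).ne'
  have hall : ∀ a ∈ S, w a = 0 := by
    intro a ha
    by_cases h : P a
    · refine weights A (q - c) (fun a ha => hw0 a (Finset.mem_filter.1 ha).1) (fun a ha => ?_) hu0 a
        (Finset.mem_filter.2 ⟨ha, h⟩)
      rw [hA, Finset.mem_filter] at ha
      exact pos a q (by rwa [hS a ha.1]) le_rfl (haq a ha.1 ha.2)
    · refine weights B (p - c) (fun a ha => hw0 a (Finset.mem_filter.1 ha).1) (fun b hb => ?_) hv0 a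
        (Finset.mem_filter.2 ⟨ha, h⟩)
      rw [hB, Finset.mem_filter] at hb
      rw [real_inner_comm]
      exact pos p b le_rfl (by rwa [hS b hb.1]) (hpb b hb.1 hb.2)
  rw [Finset.sum_eq_zero hall] at hw1
  exact zero_ne_one hw1

/-- Deleting the edge `pq` from a connected graph leaves every vertex connected to `p` or `q`. -/
lemma reachable_or_reachable_of_deleteEdge {V : Type*} {T : SimpleGraph V} (hT : T.Connected)
    (p q v : V) :
    (T.deleteEdges {s(p, q)}).Reachable p v ∨ (T.deleteEdges {s(p, q)}).Reachable q v := by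
  obtain ⟨W⟩ := hT.preconnected p v
  have step : ∀ {x y : V}, T.Walk x y →
      ((T.deleteEdges {s(p, q)}).Reachable p x ∨ (T.deleteEdges {s(p, q)}).Reachable q x) →
      ((T.deleteEdges {s(p, q)}).Reachable p y ∨ (T.deleteEdges {s(p, q)}).Reachable q y) := by
    intro x y W
    induction W with
    | nil => exact id
    | @cons x y z hxy _ ih =>
      intro hx
      apply ih
      by_cases he : s(x, y) = s(p, q)
      · rcases Sym2.eq_iff.1 he with ⟨-, rfl⟩ | ⟨-, rfl⟩
        · exact Or.inr .rfl
        · exact Or.inl .rfl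
      · have hadj : (T.deleteEdges {s(p, q)}).Adj x y := by
          rw [SimpleGraph.deleteEdges_adj]
          exact ⟨hxy, he⟩
        exact hx.imp (·.trans hadj.reachable) (·.trans hadj.reachable)
  exact step W (Or.inl .rfl)

/-- Edge exchange: the two components left by the deletion of a tree edge `pq` can be joined
by any edge `ab` between them, giving again a tree. -/
lemma isTree_exchange {V : Type*} {T : SimpleGraph V} (hT : T.IsTree) {p q a b : V}
    (hpq : T.Adj p q) (ha : (T.deleteEdges {s(p, q)}).Reachable p a)
    (hb : (T.deleteEdges {s(p, q)}).Reachable q b) :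
    (T.deleteEdges {s(p, q)} ⊔ SimpleGraph.edge a b).IsTree := by
  have hbr := SimpleGraph.isAcyclic_iff_forall_adj_isBridge.1 hT.isAcyclic hpq
  rw [SimpleGraph.isBridge_iff] at hbr
  have hab : ¬ (T.deleteEdges {s(p, q)}).Reachable a b :=
    fun h => hbr ((ha.trans h).trans hb.symm)
  have hne : a ≠ b := fun h => hab (h ▸ .rfl)
  set F := T.deleteEdges {s(p, q)} with hF
  have hle : F ≤ F ⊔ SimpleGraph.edge a b := le_sup_left
  have hadj : (F ⊔ SimpleGraph.edge a b).Adj a b := by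
    rw [SimpleGraph.sup_adj, SimpleGraph.edge_adj]
    exact Or.inr ⟨Or.inl ⟨rfl, rfl⟩, hne⟩
  have hpv : ∀ v, (F ⊔ SimpleGraph.edge a b).Reachable p v := by
    intro v
    rcases reachable_or_reachable_of_deleteEdge hT.connected p q v with h | h
    · exact h.mono hle
    · exact (((ha.mono hle).trans hadj.reachable).trans (hb.mono hle).symm).trans (h.mono hle)
  have : Nonempty V := ⟨p⟩
  exact ⟨⟨fun u v => (hpv u).symm.trans (hpv v)⟩,
    SimpleGraph.IsAcyclic.sup_edge_of_not_reachable hab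
      (hT.isAcyclic.anti (SimpleGraph.deleteEdges_le _))⟩

lemma dist_le_of_maxSum {d : ℕ} {V : Type} [Fintype V] (f : V → EuclideanSpace ℝ (Fin d))
    {T : SimpleGraph V} (hT : T.IsTree)
    (hmax : ∀ T' : SimpleGraph V, T'.IsTree → graphCost f T' ≤ graphCost f T) {p q a b : V}
    (hpq : T.Adj p q) (ha : (T.deleteEdges {s(p, q)}).Reachable p a)
    (hb : (T.deleteEdges {s(p, q)}).Reachable q b) :
    dist (f a) (f b) ≤ dist (f p) (f q) := by
  classical
  have hbr := SimpleGraph.isAcyclic_iff_forall_adj_isBridge.1 hT.isAcyclic hpq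
  rw [SimpleGraph.isBridge_iff] at hbr
  have hab : ¬ (T.deleteEdges {s(p, q)}).Reachable a b :=
    fun h => hbr ((ha.trans h).trans hb.symm)
  have hne : a ≠ b := fun h => hab (h ▸ .rfl)
  have h := hmax _ (isTree_exchange hT hpq ha hb)
  set F := T.deleteEdges {s(p, q)} with hF
  have e1 : (Set.toFinite T.edgeSet).toFinset
      = insert s(p, q) (Set.toFinite F.edgeSet).toFinset := by
    ext e
    simp only [Set.Finite.mem_toFinset, Finset.mem_insert, hF, SimpleGraph.edgeSet_deleteEdges,
      Set.mem_sdiff, Set.mem_singleton_iff]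
    by_cases h : e = s(p, q)
    · simp [h, hpq]
    · simp [h]
  have e2 : (Set.toFinite (F ⊔ SimpleGraph.edge a b).edgeSet).toFinset
      = insert s(a, b) (Set.toFinite F.edgeSet).toFinset := by
    ext e
    simp only [Set.Finite.mem_toFinset, Finset.mem_insert, SimpleGraph.edgeSet_sup,
      SimpleGraph.edgeSet_edge_of_ne hne, Set.mem_union, Set.mem_singleton_iff]
    exact or_comm
  have n1 : s(p, q) ∉ (Set.toFinite F.edgeSet).toFinset := by
    simp only [Set.Finite.mem_toFinset, SimpleGraph.mem_edgeSet]
    exact fun h => hbr h.reachable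
  have n2 : s(a, b) ∉ (Set.toFinite F.edgeSet).toFinset := by
    simp only [Set.Finite.mem_toFinset, SimpleGraph.mem_edgeSet]
    exact fun h => hab h.reachable
  unfold graphCost at h
  rw [e1, e2, Finset.sum_insert n1, Finset.sum_insert n2] at h
  simpa using h

/-- If `c` is the center of the smallest enclosing ball of a finite set `X ⊂ ℝ^d`
(i.e. a global minimum point of `x ↦ max_{a ∈ X} ‖x − a‖`) and `T` is a max-sum tree
of `X`, then for every edge `pq` of `T` we have `⟨p − c, q − c⟩ ≤ 0`; equivalently,
`c` lies in the closed ball with diameter `pq`. -/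
theorem maxSumTree_edge_inner_nonpos {d : ℕ} (X : Finset (EuclideanSpace ℝ (Fin d)))
    (hX : X.Nonempty) (c : EuclideanSpace ℝ (Fin d))
    (hc : ∀ x : EuclideanSpace ℝ (Fin d),
      X.sup' hX (fun a => ‖c - a‖) ≤ X.sup' hX (fun a => ‖x - a‖))
    (T : SimpleGraph {x // x ∈ X}) (hT : T.IsTree)
    (hmax : ∀ T' : SimpleGraph {x // x ∈ X}, T'.IsTree →
      graphCost Subtype.val T' ≤ graphCost Subtype.val T) :
    ∀ p q : {x // x ∈ X}, T.Adj p q →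
      ⟪(p : EuclideanSpace ℝ (Fin d)) - c, (q : EuclideanSpace ℝ (Fin d)) - c⟫ ≤ 0 := by
  intro p q hpq
  have exchange : ∀ a b : {x // x ∈ X}, (T.deleteEdges {s(p, q)}).Reachable p a →
      (T.deleteEdges {s(p, q)}).Reachable q b → ‖a.1 - b.1‖ ≤ ‖p.1 - q.1‖ := fun a b ha hb => by
    rw [← dist_eq_norm, ← dist_eq_norm]
    exact dist_le_of_maxSum Subtype.val hT hmax hpq ha hb
  have hle : ∀ a ∈ X, ‖a - c‖ ≤ X.sup' hX (fun a => ‖c - a‖) := fun a ha => by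
    rw [norm_sub_rev]
    exact Finset.le_sup' (fun a => ‖c - a‖) ha
  -- The class of `p`: the points joined to `p` after the deletion of the edge `pq`.
  refine inner_nonpos_of_split _ c p q _ (fun a ha => ?_) (center_mem_convexHull X hX c hc)
    (hle p p.2) (hle q q.2)
    (fun a => ∃ h : a ∈ X, (T.deleteEdges {s(p, q)}).Reachable p ⟨a, h⟩) ?_ ?_ ?_
  · rw [norm_sub_rev]
    exact (Finset.mem_filter.1 ha).2
  all_goals
    have other : ∀ b (hb : b ∈ X), (¬ ∃ h : b ∈ X,
        (T.deleteEdges {s(p, q)}).Reachable p ⟨b, h⟩) →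
        (T.deleteEdges {s(p, q)}).Reachable q ⟨b, hb⟩ := fun b hb h =>
      (reachable_or_reachable_of_deleteEdge hT.connected p q ⟨b, hb⟩).resolve_left
        fun h' => h ⟨hb, h'⟩
  · rintro a - ⟨ha, hpa⟩ b hb hnb
    exact exchange ⟨a, ha⟩ ⟨b, _⟩ hpa (other b (Finset.mem_filter.1 hb).1 hnb)
  · rintro a - ⟨ha, hpa⟩
    exact exchange ⟨a, ha⟩ q hpa .rfl
  · intro b hb hnb
    exact exchange p ⟨b, _⟩ .rfl (other b (Finset.mem_filter.1 hb).1 hnb)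
end

section
/- Let k ∈ {2, 3} and let a₁b₁, …, a_kb_k be k segments in ℝ² whose 2k endpoints are pairwise distinct, such that: (i) for each i, ‖(a_i+b_i)/2‖ = ‖a_i−b_i‖/2, i.e., the origin o lies on the boundary circle of the closed disc B(a_ib_i) with diameter a_ib_i; (ii) o ∈ conv{(a_i+b_i)/2 : 1 ≤ i ≤ k}, while o ∉ conv{(a_i+b_i)/2 : i ∈ I} for every proper nonempty subset I ⊊ {1, …, k}. For each i let ℓ_i = {x : ⟨x, a_i+b_i⟩ = 0} (the tangent line to B(a_ib_i) at o) and set r_{a_i} = dist(a_i, ℓ_i) and r_{b_i} = dist(b_i, ℓ_i). Then at least one of the following holds: (A) there exist indices i ≠ j and labelings {u_i, v_i} = {a_i, b_i}, {u_j, v_j} = {a_j, b_j} such that ‖v_i − u_j‖ > r_{v_i} + r_{u_j} and ‖v_j − u_i‖ > r_{v_j} + r_{u_i} (an alternating cycle of length 4); or (B) for every index i there exists an index j ≠ i such that either both ‖a_i − a_j‖ > r_{a_i} + r_{a_j} and ‖a_i − b_j‖ > r_{a_i} + r_{b_j}, or both ‖b_i − a_j‖ > r_{b_i} + r_{a_j}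 and ‖b_i − b_j‖ > r_{b_i} + r_{b_j}. -/
/-!
The hypothesis `‖(a + b) / 2‖ = ‖a - b‖ / 2` says `a ⟂ b`. In the orthonormal frame `(n, Jn)` with
`n = (a + b) / ‖a + b‖` and `J` the rotation by a right angle, the endpoints of a segment are
`r₊ n + t Jn` and `r₋ n - t Jn` with `r₊, r₋ ≥ 0` and `r₊ r₋ = t ^ 2`; after naming the endpoints
suitably, `t ≥ 0`. The numbers `r₊, r₋` are the distances to the tangent line. Two segments never
both have `t = 0`, since then both would have the origin as an endpoint.

Let `2h` be the angle from `n i` to `n j`. An edge between `r n i + s J(n i)` and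
`r' n j + s' J(n j)` is called red if its length exceeds `r + r'`. With `T = tan h`, an edge is not
red iff
`(1 + T ^ 2) (s - s') ^ 2 ≤ 4 (r + T s) (r' - T s')` (`Frame.le_of_not_red`).

If `n j = - n i`, the edges `(+,+)` and `(-,-)` are both red and form an alternating cycle
(`Frame.red_of_opposite`). As the origin lies in the convex hull of the midpoints, the only other
possibility is `k = 3` with the three directions positively or negatively cyclically ordered
(`opposite_or_cyclic`). In that case all three `T` are positive and the product of any two of them
exceeds `1`, because the half-angles are less than `π / 2` and add up to `π`.

For consecutive `i, j`, if `(+,+)` is not red then `T t j ≤ r₊ j` (`HalfBound` at `j, true`), and if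
`(-,-)` is not red then `T t i ≤ r₋ i` (`HalfBound` at `i, false`). Both bounds at one segment, coming
from its two neighbours, would give `t ^ 2 = r₊ r₋ ≥ T T' t ^ 2 > t ^ 2`. So without an alternating
cycle either every `(-,-)` and no `(+,+)` fails to be red, or the other way round. The edge `(-,+)` is not
red only if both bounds hold, so it is red throughout, and each segment gets an endpoint joined by
red edges to both endpoints of one neighbour (`alternating_or_star`).
-/

open scoped RealInnerProductSpace

/-! ### Segments in orthonormal frames -/

/-- The signed offset `± t` of an endpoint along the tangent line. -/
def offset (t : ℝ) (e : Bool) : ℝ := if e then t else -t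

/-- Description of a segment with endpoints `P true`, `P false` in the orthonormal frame of its
unit direction `n`: the endpoints have normal coordinates `r e` and tangential coordinates `± t`. -/
structure Frame (n : EuclideanSpace ℝ (Fin 2)) (P : Bool → EuclideanSpace ℝ (Fin 2))
    (r : Bool → ℝ) (t : ℝ) : Prop where
  unit : n 0 ^ 2 + n 1 ^ 2 = 1
  fst : ∀ e, P e 0 = r e * n 0 - offset t e * n 1
  snd : ∀ e, P e 1 = r e * n 1 + offset t e * n 0
  nonneg : ∀ e, 0 ≤ r e
  t_nonneg : 0 ≤ t
  mul_eq : r true * r false = t ^ 2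

/-- The scalar product of two plane vectors in coordinates. -/
def dot2 (m n : EuclideanSpace ℝ (Fin 2)) : ℝ := m 0 * n 0 + m 1 * n 1

/-- The oriented area spanned by two plane vectors. -/
def cross2 (m n : EuclideanSpace ℝ (Fin 2)) : ℝ := m 0 * n 1 - m 1 * n 0

/-- The edge between `p` and `q` is red: the discs of radii `r`, `r'` around them are disjoint. -/
def Red (p : EuclideanSpace ℝ (Fin 2)) (r : ℝ) (q : EuclideanSpace ℝ (Fin 2)) (r' : ℝ) : Prop :=
  r + r' < ‖p - q‖

lemma Red.symm {p q : EuclideanSpace ℝ (Fin 2)} {r r' : ℝ} (h : Red p r q r') :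
    Red q r' p r := by
  unfold Red at *
  rw [norm_sub_rev, add_comm]
  exact h

lemma norm_sq_coord (x : EuclideanSpace ℝ (Fin 2)) : ‖x‖ ^ 2 = x 0 ^ 2 + x 1 ^ 2 := by
  rw [EuclideanSpace.norm_sq_eq, Fin.sum_univ_two]
  simp

lemma inner_coord (x y : EuclideanSpace ℝ (Fin 2)) : ⟪x, y⟫ = x 0 * y 0 + x 1 * y 1 := by
  rw [PiLp.inner_apply, Fin.sum_univ_two]
  simp [mul_comm]

lemma ext_coord {x y : EuclideanSpace ℝ (Fin 2)} (h0 : x 0 = y 0) (h1 : x 1 = y 1) : x = y := by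
  ext i
  fin_cases i
  · exact h0
  · exact h1

lemma dot_sq_add_cross_sq {m n : EuclideanSpace ℝ (Fin 2)} (hm : m 0 ^ 2 + m 1 ^ 2 = 1)
    (hn : n 0 ^ 2 + n 1 ^ 2 = 1) : dot2 m n ^ 2 + cross2 m n ^ 2 = 1 := by
  have : dot2 m n ^ 2 + cross2 m n ^ 2 = (m 0 ^ 2 + m 1 ^ 2) * (n 0 ^ 2 + n 1 ^ 2) := by
    unfold dot2 cross2; ring
  rw [this, hm, hn, one_mul]

/-! ### Red edges between two segments -/

section Pair

variable {m n : EuclideanSpace ℝ (Fin 2)} {P Q : Bool → EuclideanSpace ℝ (Fin 2)}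
  {r r' : Bool → ℝ} {t t' : ℝ}

lemma Frame.norm_sub_sq (A : Frame m P r t) (B : Frame n Q r' t') (e f : Bool) :
    ‖P e - Q f‖ ^ 2 - (r e + r' f) ^ 2 =
      offset t e ^ 2 + offset t' f ^ 2 - 2 * (r e * r' f) * (1 + dot2 m n)
        - 2 * (offset t e * offset t' f) * dot2 m n
        - 2 * cross2 m n * (offset t e * r' f - r e * offset t' f) := by
  rw [norm_sq_coord, PiLp.sub_apply, PiLp.sub_apply, A.fst, A.snd, B.fst, B.snd]
  unfold dot2 cross2
  linear_combination (r e ^ 2 + offset t e ^ 2) * A.unit + (r' f ^ 2 + offset t' f ^ 2) * B.unit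

lemma red_of_sq {e f : Bool}
    (h : 0 < ‖P e - Q f‖ ^ 2 - (r e + r' f) ^ 2) : Red (P e) (r e) (Q f) (r' f) :=
  lt_of_pow_lt_pow_left₀ 2 (norm_nonneg _) (by linarith)

/-- Two different segments cannot both have the origin as an endpoint. -/
lemma Frame.add_pos (A : Frame m P r t) (B : Frame n Q r' t') (hne : ∀ e f, P e ≠ Q f) :
    0 < t + t' := by
  have key : ∀ {n : EuclideanSpace ℝ (Fin 2)} {P : Bool → EuclideanSpace ℝ (Fin 2)}
      {r : Bool → ℝ} {t : ℝ}, Frame n P r t → t = 0 → ∃ e, P e = 0 := by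
    intro n P r t A ht
    have h := A.mul_eq
    rw [ht, zero_pow two_ne_zero, mul_eq_zero] at h
    have hz : ∀ e, r e = 0 → P e = 0 := fun e he =>
      ext_coord (by simp [A.fst, he, ht, offset]) (by simp [A.snd, he, ht, offset])
    rcases h with h | h
    · exact ⟨_, hz _ h⟩
    · exact ⟨_, hz _ h⟩
  by_contra hc
  have h1 := A.t_nonneg
  have h2 := B.t_nonneg
  obtain ⟨e, he⟩ := key A (by linarith)
  obtain ⟨f, hf⟩ := key B (by linarith)
  exact hne e f (he.trans hf.symm)

/-- For opposite directions, both tangent lines coincide and endpoints with equal labels have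
different projections to this line. -/
lemma Frame.red_of_opposite (A : Frame m P r t) (B : Frame n Q r' t') (hne : ∀ e f, P e ≠ Q f)
    (h : dot2 m n = -1) (e : Bool) : Red (P e) (r e) (Q e) (r' e) := by
  have hc : cross2 m n = 0 := by
    have := dot_sq_add_cross_sq A.unit B.unit
    rw [h] at this
    exact pow_eq_zero_iff two_ne_zero |>.1 (by linarith)
  have hp := A.add_pos B hne
  apply red_of_sq
  rw [A.norm_sub_sq B, h, hc]
  have : 0 < (t + t') ^ 2 := by positivity
  cases e <;> simp only [offset] <;> norm_num <;> nlinarith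

/-- `T` is the tangent of half the angle from `m` to `n`. -/
structure HalfTan (m n : EuclideanSpace ℝ (Fin 2)) (T : ℝ) : Prop where
  pos : 0 < T
  dot : dot2 m n * (1 + T ^ 2) = 1 - T ^ 2
  cross : cross2 m n * (1 + T ^ 2) = 2 * T

lemma exists_halfTan (hm : m 0 ^ 2 + m 1 ^ 2 = 1) (hn : n 0 ^ 2 + n 1 ^ 2 = 1)
    (h : 0 < cross2 m n) : ∃ T, HalfTan m n T := by
  have h1 := dot_sq_add_cross_sq hm hn
  have hc : 0 < 1 + dot2 m n := by nlinarith [sq_nonneg (dot2 m n)]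
  refine ⟨cross2 m n / (1 + dot2 m n), by positivity, ?_, ?_⟩
  · field_simp
    linear_combination (1 + dot2 m n) * h1
  · field_simp
    linear_combination h1

/-- Factorised form of the failure of an edge to be red. -/
lemma Frame.le_of_not_red (A : Frame m P r t) (B : Frame n Q r' t') {T : ℝ} (hT : HalfTan m n T)
    {e f : Bool} (h : ¬ Red (P e) (r e) (Q f) (r' f)) :
    (1 + T ^ 2) * (offset t e - offset t' f) ^ 2 ≤
      4 * ((r e + T * offset t e) * (r' f - T * offset t' f)) := by
  have h0 : ‖P e - Q f‖ ^ 2 - (r e + r' f) ^ 2 ≤ 0 := not_lt.1 fun h' => h (red_of_sq h')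
  have h1 := A.norm_sub_sq B e f
  have h2 : (1 + T ^ 2) * (‖P e - Q f‖ ^ 2 - (r e + r' f) ^ 2) ≤ 0 :=
    mul_nonpos_of_nonneg_of_nonpos (by positivity) h0
  rw [h1] at h2
  have h3 := hT.dot
  have h4 := hT.cross
  linear_combination h2 + (2 * (r e * r' f) + 2 * (offset t e * offset t' f)) * h3 +
    2 * (offset t e * r' f - r e * offset t' f) * h4

/-- The endpoint at normal height `ρ` and tangential distance `t` lies off the tangent line,
in a direction making with that line an angle whose tangent is at least `T`. -/
def HalfBound (T t ρ : ℝ) : Prop := T * t ≤ ρ ∧ 0 < ρ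

lemma halfBound_of_le {T t t' ρ ρ' : ℝ} (hT : 0 < T) (ht : 0 ≤ t) (ht' : 0 ≤ t')
    (hp : 0 < t + t') (hρ : 0 ≤ ρ) (hρ' : 0 ≤ ρ')
    (h : (1 + T ^ 2) * (t - t') ^ 2 ≤ 4 * ((ρ + T * t) * (ρ' - T * t'))) :
    HalfBound T t' ρ' := by
  have hx : 0 ≤ ρ + T * t := by positivity
  have hl : 0 ≤ (1 + T ^ 2) * (t - t') ^ 2 := by positivity
  -- A strict form is needed when one of the two segments ends at the origin.
  have hN : t = 0 ∨ t' = 0 → 0 < (1 + T ^ 2) * (t - t') ^ 2 := by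
    intro h0
    have : t - t' ≠ 0 := by
      rcases h0 with h0 | h0 <;> subst h0 <;> intro hh <;> linarith
    positivity
  have hx' : 0 < ρ + T * t := by
    rcases hx.lt_or_eq with hx | hx
    · exact hx
    · have h1 : t = 0 := by
        have : T * t = 0 := le_antisymm (by linarith) (by positivity)
        exact (mul_eq_zero.1 this).resolve_left hT.ne'
      have := hN (Or.inl h1)
      rw [← hx] at h
      linarith
  have h1 : 0 ≤ ρ' - T * t' := by
    by_contra hc
    have := mul_neg_of_pos_of_neg hx' (not_le.1 hc)
    linarith
  refine ⟨by linarith, hρ'.lt_of_ne fun h0 => ?_⟩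
  have h2 : t' = 0 := by
    have : T * t' = 0 := le_antisymm (by linarith) (by positivity)
    exact (mul_eq_zero.1 this).resolve_left hT.ne'
  have := hN (Or.inr h2)
  rw [← h0, h2] at h
  rw [h2] at this
  linarith

lemma Frame.halfBound_true (A : Frame m P r t) (B : Frame n Q r' t') (hne : ∀ e f, P e ≠ Q f)
    {T : ℝ} (hT : HalfTan m n T) (h : ¬ Red (P true) (r true) (Q true) (r' true)) :
    HalfBound T t' (r' true) := by
  have := A.le_of_not_red B hT h
  simp only [offset, if_true] at this
  exact halfBound_of_le hT.pos A.t_nonneg B.t_nonneg (A.add_pos B hne) (A.nonneg _) (B.nonneg _)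
    this

lemma Frame.halfBound_false (A : Frame m P r t) (B : Frame n Q r' t') (hne : ∀ e f, P e ≠ Q f)
    {T : ℝ} (hT : HalfTan m n T) (h : ¬ Red (P false) (r false) (Q false) (r' false)) :
    HalfBound T t (r false) := by
  have := A.le_of_not_red B hT h
  simp only [offset, Bool.false_eq_true, if_false] at this
  have hp := A.add_pos B hne
  exact halfBound_of_le hT.pos B.t_nonneg A.t_nonneg (by linarith) (B.nonneg _) (A.nonneg _)
    (by linarith)

/-- The edge joining the two endpoints turned away from each other. -/
lemma Frame.halfBound_far (A : Frame m P r t) (B : Frame n Q r' t') (hne : ∀ e f, P e ≠ Q f)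
    {T : ℝ} (hT : HalfTan m n T) (h : ¬ Red (P false) (r false) (Q true) (r' true)) :
    HalfBound T t (r false) ∧ HalfBound T t' (r' true) := by
  have h := A.le_of_not_red B hT h
  simp only [offset, if_true, Bool.false_eq_true, if_false] at h
  have hp := A.add_pos B hne
  have h1 := A.t_nonneg
  have h2 := B.t_nonneg
  have h3 := A.nonneg false
  have h4 := B.nonneg true
  have hT0 := hT.pos
  have hTt : 0 ≤ T * t := by positivity
  have hTt' : 0 ≤ T * t' := by positivity
  have hl : 0 < (t + t') ^ 2 := by positivity
  have hpos : 0 < (r false - T * t) * (r' true - T * t') := by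
    have : 0 < (1 + T ^ 2) * (t + t') ^ 2 := by positivity
    nlinarith
  rcases pos_and_pos_or_neg_and_neg_of_mul_pos hpos with ⟨ha, hb⟩ | ⟨ha, hb⟩
  · exact ⟨⟨by linarith, by linarith⟩, ⟨by linarith, by linarith⟩⟩
  · exfalso
    have h5 : (T * t - r false) * (T * t' - r' true) ≤ (T * t) * (T * t') :=
      mul_le_mul (by linarith) (by linarith) (by linarith) hTt
    have h6 : 0 ≤ T ^ 2 * (t - t') ^ 2 := by positivity
    nlinarith

lemma Frame.not_both (A : Frame m P r t) {T T' : ℝ} (hT' : 0 < T') (hTT : 1 < T * T')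
    (h : HalfBound T t (r true)) (h' : HalfBound T' t (r false)) : False := by
  have h0 : 0 < t ^ 2 := by
    rw [← A.mul_eq]
    exact mul_pos h.2 h'.2
  have h1 : (T * t) * (T' * t) ≤ r true * r false :=
    mul_le_mul h.1 h'.1 (mul_nonneg hT'.le A.t_nonneg) h.2.le
  rw [A.mul_eq] at h1
  nlinarith

end Pair

/-! ### Three segments in cyclic order -/

/-- For `l, m, n` in positive cyclic order, the half-angles at `m` add up to more than `π / 2`. -/
lemma one_lt_mul_halfTan {l m n : EuclideanSpace ℝ (Fin 2)} (hm : m 0 ^ 2 + m 1 ^ 2 = 1)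
    {T T' : ℝ} (h : HalfTan l m T) (h' : HalfTan m n T') (hc : 0 < cross2 n l) : 1 < T * T' := by
  have h1 := h.pos
  have h2 := h'.pos
  have e : cross2 n l = -(cross2 l m * dot2 m n + dot2 l m * cross2 m n) := by
    unfold cross2 dot2
    linear_combination (-(n 0 * l 1 - n 1 * l 0)) * hm
  have e2 : cross2 n l * ((1 + T ^ 2) * (1 + T' ^ 2)) = 2 * (T + T') * (T * T' - 1) := by
    rw [e]
    linear_combination (-(dot2 m n * (1 + T' ^ 2))) * h.cross - 2 * T * h'.dot -
      cross2 m n * (1 + T' ^ 2) * h.dot - (1 - T ^ 2) * h'.cross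
  have h3 : 0 < cross2 n l * ((1 + T ^ 2) * (1 + T' ^ 2)) := by positivity
  rw [e2] at h3
  have := pos_of_mul_pos_right h3 (by positivity)
  linarith

section Family

variable {ι : Type*} (P : ι → Bool → EuclideanSpace ℝ (Fin 2)) (r : ι → Bool → ℝ)

/-- The segments `i` and `j` carry an alternating cycle of length four. -/
def Alternating (i j : ι) : Prop :=
  ∃ e f, Red (P i e) (r i e) (P j f) (r j f) ∧ Red (P i !e) (r i !e) (P j !f) (r j !f)

/-- Some endpoint of the segment `i` has red edges to both endpoints of the segment `j`. -/
def RedStar (i j : ι) : Prop :=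
  ∃ e, ∀ f, Red (P i e) (r i e) (P j f) (r j f)

/-- Three segments whose directions are in positive cyclic order. -/
lemma alternating_or_star {n : ι → EuclideanSpace ℝ (Fin 2)} {t : ι → ℝ}
    (A : ∀ i, Frame (n i) (P i) (r i) (t i)) (hne : ∀ i j, i ≠ j → ∀ e f, P i e ≠ P j f)
    {i j k : ι} (hij : i ≠ j) (hjk : j ≠ k) (hki : k ≠ i) (cij : 0 < cross2 (n i) (n j))
    (cjk : 0 < cross2 (n j) (n k)) (cki : 0 < cross2 (n k) (n i)) :
    (Alternating P r i j ∨ Alternating P r j k ∨ Alternating P r k i) ∨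
      (RedStar P r i j ∧ RedStar P r j k ∧ RedStar P r k i) ∨
      (RedStar P r i k ∧ RedStar P r j i ∧ RedStar P r k j) := by
  obtain ⟨T₁, h₁⟩ := exists_halfTan (A i).unit (A j).unit cij
  obtain ⟨T₂, h₂⟩ := exists_halfTan (A j).unit (A k).unit cjk
  obtain ⟨T₃, h₃⟩ := exists_halfTan (A k).unit (A i).unit cki
  have Bi := (A i).not_both h₁.pos (one_lt_mul_halfTan (A i).unit h₃ h₁ cjk)
  have Bj := (A j).not_both h₂.pos (one_lt_mul_halfTan (A j).unit h₁ h₂ cki)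
  have Bk := (A k).not_both h₃.pos (one_lt_mul_halfTan (A k).unit h₂ h₃ cij)
  have pi := (A i).halfBound_true (A j) (hne i j hij) h₁
  have pj := (A j).halfBound_true (A k) (hne j k hjk) h₂
  have pk := (A k).halfBound_true (A i) (hne k i hki) h₃
  have mi := (A i).halfBound_false (A j) (hne i j hij) h₁
  have mj := (A j).halfBound_false (A k) (hne j k hjk) h₂
  have mk := (A k).halfBound_false (A i) (hne k i hki) h₃
  have fi := (A i).halfBound_far (A j) (hne i j hij) h₁
  have fj := (A j).halfBound_far (A k) (hne j k hjk) h₂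
  have fk := (A k).halfBound_far (A i) (hne k i hki) h₃
  by_cases hA : Alternating P r i j ∨ Alternating P r j k ∨ Alternating P r k i
  · exact Or.inl hA
  right
  rw [not_or, not_or] at hA
  have alt : ∀ {x y : ι}, ¬ Alternating P r x y →
      ¬ (Red (P x true) (r x true) (P y true) (r y true) ∧
        Red (P x false) (r x false) (P y false) (r y false)) :=
    fun hn hh => hn ⟨true, true, hh⟩
  have ai := alt hA.1
  have aj := alt hA.2.1
  have ak := alt hA.2.2
  have starF : ∀ {x y : ι}, Red (P x false) (r x false) (P y true) (r y true) →
      Red (P x false) (r x false) (P y false) (r y false) → RedStar P r x y :=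
    fun ha hb => ⟨false, fun f => by cases f; exacts [hb, ha]⟩
  have starT : ∀ {x y : ι}, Red (P x false) (r x false) (P y true) (r y true) →
      Red (P x true) (r x true) (P y true) (r y true) → RedStar P r y x :=
    fun ha hb => ⟨true, fun f => by cases f; exacts [ha.symm, hb.symm]⟩
  by_cases c : HalfBound T₁ (t i) (r i false)
  · have ri := not_not.1 (mt pk fun h => Bi h c)
    have ck := mk fun h => ak ⟨ri, h⟩
    have rk := not_not.1 (mt pj fun h => Bk h ck)
    have cj := mj fun h => aj ⟨rk, h⟩
    have gj : ¬ HalfBound T₁ (t j) (r j true) := fun h => Bj h cj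
    have rj := not_not.1 (mt pi gj)
    right
    exact ⟨starT (not_not.1 (mt fk fun h => Bi h.2 c)) ri,
      starT (not_not.1 (mt fi fun h => gj h.2)) rj,
      starT (not_not.1 (mt fj fun h => Bk h.2 ck)) rk⟩
  · have ri := not_not.1 (mt mi c)
    have gj := pi fun h => ai ⟨h, ri⟩
    have rj := not_not.1 (mt mj (Bj gj))
    have gk := pj fun h => aj ⟨h, rj⟩
    have rk := not_not.1 (mt mk (Bk gk))
    left
    exact ⟨starF (not_not.1 (mt fi fun h => c h.1)) ri,
      starF (not_not.1 (mt fj fun h => Bj gj h.1)) rj,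
      starF (not_not.1 (mt fk fun h => Bk gk h.1)) rk⟩

end Family

/-! ### Positive relations between unit vectors -/

lemma eq_of_cross_zero {m n : EuclideanSpace ℝ (Fin 2)} (hm : m 0 ^ 2 + m 1 ^ 2 = 1)
    (hn : n 0 ^ 2 + n 1 ^ 2 = 1) (hc : cross2 m n = 0) : dot2 m n = -1 ∨ m = n := by
  have h := dot_sq_add_cross_sq hm hn
  have h1 : (dot2 m n + 1) * (dot2 m n - 1) = 0 := by
    rw [hc] at h
    linear_combination h
  rcases mul_eq_zero.1 h1 with h1 | h1
  · left; linarith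
  · right
    unfold dot2 at h1
    have h2 : (m 0 - n 0) ^ 2 + (m 1 - n 1) ^ 2 = 0 := by
      linear_combination hm + hn - 2 * h1
    have h3 : m 0 - n 0 = 0 := pow_eq_zero_iff two_ne_zero |>.1
      (le_antisymm (by nlinarith [sq_nonneg (m 1 - n 1)]) (sq_nonneg _))
    have h4 : m 1 - n 1 = 0 := pow_eq_zero_iff two_ne_zero |>.1
      (le_antisymm (by nlinarith [sq_nonneg (m 0 - n 0)]) (sq_nonneg _))
    exact ext_coord (by linarith) (by linarith)

lemma dot_eq_neg_one {m n : EuclideanSpace ℝ (Fin 2)} (hm : m 0 ^ 2 + m 1 ^ 2 = 1)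
    (hn : n 0 ^ 2 + n 1 ^ 2 = 1) {x y : ℝ} (hx : 0 ≤ x) (hy : 0 ≤ y) (hp : 0 < x + y)
    (h0 : x * m 0 + y * n 0 = 0) (h1 : x * m 1 + y * n 1 = 0) : dot2 m n = -1 := by
  have e : x ^ 2 = y ^ 2 := by
    linear_combination (-x ^ 2) * hm + y ^ 2 * hn + (x * m 0 - y * n 0) * h0 +
      (x * m 1 - y * n 1) * h1
  have e' : x = y := by
    rwa [sq_eq_sq₀ hx hy] at e
  subst e'
  have hx0 : x ≠ 0 := by intro h; subst h; simp at hp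
  unfold dot2
  apply mul_left_cancel₀ hx0
  linear_combination m 0 * h0 + m 1 * h1 - x * hm

/-- A nontrivial nonnegative relation between three unit vectors, two of which are parallel. -/
lemma opposite_of_cross_zero {l m n : EuclideanSpace ℝ (Fin 2)} (hl : l 0 ^ 2 + l 1 ^ 2 = 1)
    (hm : m 0 ^ 2 + m 1 ^ 2 = 1) (hn : n 0 ^ 2 + n 1 ^ 2 = 1) {x y z : ℝ} (hx : 0 ≤ x)
    (hy : 0 ≤ y) (hz : 0 ≤ z) (hp : 0 < x + y + z)
    (h0 : x * l 0 + y * m 0 + z * n 0 = 0) (h1 : x * l 1 + y * m 1 + z * n 1 = 0)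
    (hc : cross2 l m = 0) : dot2 l m = -1 ∨ dot2 l n = -1 := by
  rcases eq_of_cross_zero hl hm hc with h | h
  · exact Or.inl h
  · subst h
    right
    exact dot_eq_neg_one hl hn (add_nonneg hx hy) hz hp (by linarith) (by linarith)

lemma dot2_comm (m n : EuclideanSpace ℝ (Fin 2)) : dot2 m n = dot2 n m := by
  unfold dot2; ring

lemma cross2_anticomm (m n : EuclideanSpace ℝ (Fin 2)) : cross2 m n = -cross2 n m := by
  unfold cross2; ring

lemma opposite_or_cyclic {l m n : EuclideanSpace ℝ (Fin 2)} (hl : l 0 ^ 2 + l 1 ^ 2 = 1)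
    (hm : m 0 ^ 2 + m 1 ^ 2 = 1) (hn : n 0 ^ 2 + n 1 ^ 2 = 1) {x y z : ℝ} (hx : 0 ≤ x)
    (hy : 0 ≤ y) (hz : 0 ≤ z) (hp : 0 < x + y + z)
    (h0 : x * l 0 + y * m 0 + z * n 0 = 0) (h1 : x * l 1 + y * m 1 + z * n 1 = 0) :
    (dot2 l m = -1 ∨ dot2 m n = -1 ∨ dot2 n l = -1) ∨
      (0 < cross2 l m ∧ 0 < cross2 m n ∧ 0 < cross2 n l) ∨
      (0 < cross2 m l ∧ 0 < cross2 l n ∧ 0 < cross2 n m) := by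
  by_cases c1 : cross2 l m = 0
  · have := opposite_of_cross_zero hl hm hn hx hy hz hp h0 h1 c1
    rw [dot2_comm l n] at this
    tauto
  by_cases c2 : cross2 m n = 0
  · have := opposite_of_cross_zero hm hn hl hy hz hx (by linarith) (by linarith) (by linarith) c2
    rw [dot2_comm m l] at this
    tauto
  by_cases c3 : cross2 n l = 0
  · have := opposite_of_cross_zero hn hl hm hz hx hy (by linarith) (by linarith) (by linarith) c3
    rw [dot2_comm n m] at this
    tauto
  right
  have e1 : y * cross2 l m = z * cross2 n l := by
    unfold cross2; linear_combination l 0 * h1 - l 1 * h0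
  have e2 : z * cross2 m n = x * cross2 l m := by
    unfold cross2; linear_combination m 0 * h1 - m 1 * h0
  have e3 : x * cross2 n l = y * cross2 m n := by
    unfold cross2; linear_combination n 0 * h1 - n 1 * h0
  have pos : ∀ {u v p q : ℝ}, 0 ≤ v → 0 < u → p ≠ 0 → u * p = v * q → 0 < v := by
    intro u v p q hv hu hp0 he
    refine hv.lt_of_ne fun h => ?_
    rw [← h, zero_mul] at he
    exact (mul_ne_zero hu.ne' hp0) he
  have hxyz : 0 < x ∧ 0 < y ∧ 0 < z := by
    rcases hx.lt_or_eq with hx' | hx'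
    · exact ⟨hx', pos hy hx' c3 e3, pos hz hx' c1 e2.symm⟩
    rcases hy.lt_or_eq with hy' | hy'
    · exact ⟨pos hx hy' c2 e3.symm, hy', pos hz hy' c1 e1⟩
    · have hz' : 0 < z := by linarith
      exact ⟨pos hx hz' c2 e2, pos hy hz' c3 e1.symm, hz'⟩
  obtain ⟨hx', hy', hz'⟩ := hxyz
  have sgn : ∀ {u v p q : ℝ}, 0 < u → 0 < v → u * p = v * q → 0 < p → 0 < q := by
    intro u v p q hu hv he hp0
    have := mul_pos hu hp0
    rw [he] at this
    exact pos_of_mul_pos_right this hv.le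
  rw [cross2_anticomm m l, cross2_anticomm l n, cross2_anticomm n m]
  rcases lt_or_gt_of_ne c1 with c | c
  · right
    have d1 : 0 < -cross2 l m := by linarith
    exact ⟨d1, sgn hy' hz' (by linarith) d1, sgn hx' hz' (by linarith) d1⟩
  · left
    exact ⟨c, sgn hx' hz' e2.symm c, sgn hy' hz' e1 c⟩

/-! ### Existence of the frame -/

/-- A segment seen under a right angle from the origin, in its frame. Only the upper bound
`infDist ≤ r` is recorded, since larger radii make fewer edges red. -/
lemma exists_frame (a b : EuclideanSpace ℝ (Fin 2))
    (htang : ‖(2⁻¹ : ℝ) • (a + b)‖ = ‖a - b‖ / 2) (hw : a + b ≠ 0)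
    (L : Set (EuclideanSpace ℝ (Fin 2))) (hL : L = {x | ⟪x, a + b⟫ = 0}) :
    ∃ (n : EuclideanSpace ℝ (Fin 2)) (r : Bool → ℝ) (t : ℝ) (P : Bool → EuclideanSpace ℝ (Fin 2)),
      Frame n P r t ∧ a + b = ‖a + b‖ • n ∧
      ((P true = a ∧ P false = b) ∨ (P true = b ∧ P false = a)) ∧
      ∀ e, Metric.infDist (P e) L ≤ r e := by
  have hD : 0 < ‖a + b‖ := norm_pos_iff.2 hw
  have hn1 : ‖a + b‖ = ‖a - b‖ := by
    rw [norm_smul] at htang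
    norm_num at htang
    linarith
  have hortho : a 0 * b 0 + a 1 * b 1 = 0 := by
    have h1 := norm_sq_coord (a + b)
    have h2 := norm_sq_coord (a - b)
    rw [← hn1, h1] at h2
    simp only [PiLp.add_apply, PiLp.sub_apply] at h2
    linarith
  set D := ‖a + b‖ with hDdef
  have hDsq : D ^ 2 = (a 0 + b 0) ^ 2 + (a 1 + b 1) ^ 2 := by
    rw [hDdef, norm_sq_coord]; simp
  obtain ⟨n, hn⟩ : ∃ n : EuclideanSpace ℝ (Fin 2), a + b = D • n :=
    ⟨D⁻¹ • (a + b), by rw [smul_smul, mul_inv_cancel₀ hD.ne', one_smul]⟩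
  have w0 : a 0 + b 0 = D * n 0 := by
    have := congrArg (fun x : EuclideanSpace ℝ (Fin 2) => x 0) hn
    simpa using this
  have w1 : a 1 + b 1 = D * n 1 := by
    have := congrArg (fun x : EuclideanSpace ℝ (Fin 2) => x 1) hn
    simpa using this
  have hunit : n 0 ^ 2 + n 1 ^ 2 = 1 := by
    rw [w0, w1] at hDsq
    have : D ^ 2 ≠ 0 := by positivity
    apply mul_left_cancel₀ this
    linear_combination -hDsq
  have hdist : ∀ p : EuclideanSpace ℝ (Fin 2), 0 ≤ p 0 * n 0 + p 1 * n 1 →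
      Metric.infDist p L ≤ p 0 * n 0 + p 1 * n 1 := by
    intro p hp
    have hmem : p - (p 0 * n 0 + p 1 * n 1) • n ∈ L := by
      rw [hL, Set.mem_ofPred_eq, hn, inner_coord]
      simp only [PiLp.sub_apply, PiLp.smul_apply, smul_eq_mul]
      linear_combination (-(D * (p 0 * n 0 + p 1 * n 1))) * hunit
    refine (Metric.infDist_le_dist_of_mem hmem).trans (le_of_eq ?_)
    have hnn : ‖n‖ = 1 := by
      have := norm_sq_coord n
      rw [hunit] at this
      exact (pow_eq_one_iff_of_nonneg (norm_nonneg _) two_ne_zero).1 this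
    rw [dist_eq_norm, sub_sub_cancel, norm_smul, hnn, mul_one, Real.norm_of_nonneg hp]
  -- The frame for either naming of the endpoints whose offset comes out nonnegative.
  have main : ∀ p q : EuclideanSpace ℝ (Fin 2), p 0 * q 0 + p 1 * q 1 = 0 →
      p 0 + q 0 = D * n 0 → p 1 + q 1 = D * n 1 → 0 ≤ n 0 * p 1 - n 1 * p 0 →
      ∃ (r : Bool → ℝ) (t : ℝ) (P : Bool → EuclideanSpace ℝ (Fin 2)),
        Frame n P r t ∧ (P true = p ∧ P false = q) ∧ ∀ e, Metric.infDist (P e) L ≤ r e := by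
    intro p q hpq h0 h1 ht
    have hnn : ∀ x y : EuclideanSpace ℝ (Fin 2), x 0 * y 0 + x 1 * y 1 = 0 →
        x 0 + y 0 = D * n 0 → x 1 + y 1 = D * n 1 → 0 ≤ x 0 * n 0 + x 1 * n 1 := by
      intro x y hxy e0 e1
      have : 0 ≤ D * (x 0 * n 0 + x 1 * n 1) := by
        have : D * (x 0 * n 0 + x 1 * n 1) = x 0 ^ 2 + x 1 ^ 2 := by
          linear_combination hxy - x 0 * e0 - x 1 * e1
        rw [this]; positivity
      exact nonneg_of_mul_nonneg_right this hD
    have hp := hnn p q hpq h0 h1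
    have hq := hnn q p (by linarith) (by linarith) (by linarith)
    have hcross : n 0 * q 1 - n 1 * q 0 = -(n 0 * p 1 - n 1 * p 0) := by
      linear_combination n 0 * h1 - n 1 * h0
    refine ⟨fun e => if e then p 0 * n 0 + p 1 * n 1 else q 0 * n 0 + q 1 * n 1,
      n 0 * p 1 - n 1 * p 0, fun e => if e then p else q, ⟨hunit, ?_, ?_, ?_, ht, ?_⟩, ⟨rfl, rfl⟩,
      ?_⟩
    · intro e
      cases e
      · simp only [offset, Bool.false_eq_true, if_false]
        linear_combination (-q 0) * hunit - n 1 * hcross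
      · simp only [offset, if_true]
        linear_combination (-p 0) * hunit
    · intro e
      cases e
      · simp only [offset, Bool.false_eq_true, if_false]
        linear_combination (-q 1) * hunit + n 0 * hcross
      · simp only [offset, if_true]
        linear_combination (-p 1) * hunit
    · intro e
      cases e
      · exact hq
      · exact hp
    · simp only [Bool.false_eq_true, if_false, if_true]
      linear_combination (n 0 ^ 2 + n 1 ^ 2) * hpq - (n 0 * p 1 - n 1 * p 0) * hcross
    · intro e
      cases e
      · exact hdist q hq
      · exact hdist p hp
  rcases le_total 0 (n 0 * a 1 - n 1 * a 0) with h | h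
  · obtain ⟨r, t, P, hF, hP, hd⟩ := main a b hortho w0 w1 h
    exact ⟨n, r, t, P, hF, hn, Or.inl hP, hd⟩
  · obtain ⟨r, t, P, hF, hP, hd⟩ := main b a (by linarith) (by linarith) (by linarith)
      (by nlinarith [congrArg (fun z => n 0 * z) w1, congrArg (fun z => n 1 * z) w0])
    exact ⟨n, r, t, P, hF, hn, Or.inr hP, hd⟩

/-! ### Alternating cycles and stars of red edges -/

/-- Lemma for the case `r = 0`: given `k ∈ {2,3}` segments `a_i b_i` in the plane with
pairwise distinct endpoints such that the origin lies on the boundary circle of each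
diameter-disc `B(a_i b_i)`, and the midpoints have the origin in their convex hull but
minimally so, then (with `ℓ_i = {x : ⟨x, a_i + b_i⟩ = 0}` the tangent line to `B(a_i b_i)`
at the origin, and `r_{a_i}, r_{b_i}` the distances of `a_i, b_i` to `ℓ_i`) either there
is an alternating cycle of length 4, or for every `i` there is `j ≠ i` such that either
`‖a_i − a_j‖ > r_{a_i} + r_{a_j}` and `‖a_i − b_j‖ > r_{a_i} + r_{b_j}`, or
`‖b_i − a_j‖ > r_{b_i} + r_{a_j}` and `‖b_i − b_j‖ > r_{b_i} + r_{b_j}`. -/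
theorem red_edges_lemma_zero_radius
    (k : ℕ) (hk : k = 2 ∨ k = 3)
    (a b : Fin k → EuclideanSpace ℝ (Fin 2))
    (hainj : Function.Injective a) (hbinj : Function.Injective b)
    (hab : ∀ i j, a i ≠ b j)
    (htang : ∀ i, ‖(2⁻¹ : ℝ) • (a i + b i)‖ = ‖a i - b i‖ / 2)
    (hconv : (0 : EuclideanSpace ℝ (Fin 2)) ∈
      convexHull ℝ (Set.range fun i => (2⁻¹ : ℝ) • (a i + b i)))
    (hminimal : ∀ I : Finset (Fin k), I.Nonempty → I ≠ Finset.univ →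
      (0 : EuclideanSpace ℝ (Fin 2)) ∉
        convexHull ℝ {x | ∃ i ∈ I, x = (2⁻¹ : ℝ) • (a i + b i)})
    (L : Fin k → Set (EuclideanSpace ℝ (Fin 2)))
    (hL : ∀ i, L i = {x | ⟪x, a i + b i⟫ = 0})
    (ra rb : Fin k → ℝ)
    (hra : ∀ i, ra i = Metric.infDist (a i) (L i))
    (hrb : ∀ i, rb i = Metric.infDist (b i) (L i)) :
    (∃ i j, i ≠ j ∧
      ∃ (ui vi uj vj : EuclideanSpace ℝ (Fin 2)) (rui rvi ruj rvj : ℝ),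
        ((ui = a i ∧ vi = b i ∧ rui = ra i ∧ rvi = rb i) ∨
         (ui = b i ∧ vi = a i ∧ rui = rb i ∧ rvi = ra i)) ∧
        ((uj = a j ∧ vj = b j ∧ ruj = ra j ∧ rvj = rb j) ∨
         (uj = b j ∧ vj = a j ∧ ruj = rb j ∧ rvj = ra j)) ∧
        rvi + ruj < ‖vi - uj‖ ∧ rvj + rui < ‖vj - ui‖) ∨
    (∀ i, ∃ j, j ≠ i ∧
      ((ra i + ra j < ‖a i - a j‖ ∧ ra i + rb j < ‖a i - b j‖) ∨
       (rb i + ra j < ‖b i - a j‖ ∧ rb i + rb j < ‖b i - b j‖))) := by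
  have hk2 : 2 ≤ k := by rcases hk with h | h <;> omega
  have hw : ∀ i, a i + b i ≠ 0 := by
    intro i h
    refine hminimal {i} (Finset.singleton_nonempty i) ?_ ?_
    · intro hu
      have := congrArg Finset.card hu
      rw [Finset.card_singleton, Finset.card_univ, Fintype.card_fin] at this
      omega
    · apply subset_convexHull
      exact ⟨i, Finset.mem_singleton_self i, by rw [h, smul_zero]⟩
  choose n r t P hF hn hP hd using fun i => exists_frame (a i) (b i) (htang i) (hw i) (L i) (hL i)
  have hne : ∀ i j, i ≠ j → ∀ e f, P i e ≠ P j f := by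
    intro i j hij e f
    have h1 : a i ≠ a j := fun h => hij (hainj h)
    have h2 : b i ≠ b j := fun h => hij (hbinj h)
    have h3 := hab i j
    have h4 := (hab j i).symm
    rcases hP i with ⟨u1, u2⟩ | ⟨u1, u2⟩ <;> rcases hP j with ⟨v1, v2⟩ | ⟨v1, v2⟩ <;>
      cases e <;> cases f <;> simp only [u1, u2, v1, v2] <;> assumption
  -- A red edge for the frame radii is red for the original radii.
  have hred : ∀ i j e f, Red (P i e) (r i e) (P j f) (r j f) →
      Metric.infDist (P i e) (L i) + Metric.infDist (P j f) (L j) < ‖P i e - P j f‖ :=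
    fun i j e f h => lt_of_le_of_lt (add_le_add (hd i e) (hd j f)) h
  suffices key : (∃ i j, i ≠ j ∧ Alternating P r i j) ∨ ∀ i, ∃ j, j ≠ i ∧ RedStar P r i j by
    rcases key with ⟨i, j, hij, e, f, h, h'⟩ | key
    · refine Or.inl ⟨i, j, hij, P i !e, P i e, P j f, P j !f, Metric.infDist (P i !e) (L i),
        Metric.infDist (P i e) (L i), Metric.infDist (P j f) (L j),
        Metric.infDist (P j !f) (L j), ?_, ?_, hred _ _ _ _ h, hred _ _ _ _ h'.symm⟩
      · rw [hra, hrb]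
        rcases hP i with ⟨u1, u2⟩ | ⟨u1, u2⟩ <;> cases e <;> simp [u1, u2]
      · rw [hra, hrb]
        rcases hP j with ⟨u1, u2⟩ | ⟨u1, u2⟩ <;> cases f <;> simp [u1, u2]
    · refine Or.inr fun i => ?_
      obtain ⟨j, hji, e, h⟩ := key i
      refine ⟨j, hji, ?_⟩
      have h1 := hred _ _ _ _ (h true)
      have h2 := hred _ _ _ _ (h false)
      rw [hra, hrb, hra, hrb]
      rcases hP i with ⟨u1, u2⟩ | ⟨u1, u2⟩ <;> rcases hP j with ⟨v1, v2⟩ | ⟨v1, v2⟩ <;>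
        cases e <;> simp only [u1, u2, v1, v2] at h1 h2 <;> tauto
  have hOpp : ∀ i j, i ≠ j → dot2 (n i) (n j) = -1 → Alternating P r i j := fun i j hij h =>
    ⟨true, true, (hF i).red_of_opposite (hF j) (hne i j hij) h true,
      (hF i).red_of_opposite (hF j) (hne i j hij) h false⟩
  -- The convex combination of the midpoints as a relation between the unit directions.
  obtain ⟨x, hx, hxpos, hx0, hx1⟩ : ∃ x : Fin k → ℝ, (∀ i, 0 ≤ x i) ∧ 0 < ∑ i, x i ∧
      ∑ i, x i * n i 0 = 0 ∧ ∑ i, x i * n i 1 = 0 := by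
    rw [convexHull_range_eq_exists_affineCombination] at hconv
    obtain ⟨s, w, hw0, hw1, hsum⟩ := hconv
    rw [Finset.affineCombination_eq_linear_combination _ _ _ hw1] at hsum
    have hD : ∀ i, 0 < ‖a i + b i‖ := fun i => norm_pos_iff.2 (hw i)
    have hx : ∀ i, 0 ≤ if i ∈ s then w i * ‖a i + b i‖ else 0 := by
      intro i
      split_ifs with h
      · exact mul_nonneg (hw0 i h) (hD i).le
      · exact le_rfl
    have hvec : ∑ i ∈ s, (w i * ‖a i + b i‖) • n i = 0 := by
      have h2 : ∑ i ∈ s, (w i * ‖a i + b i‖) • n i =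
          (2 : ℝ) • ∑ i ∈ s, w i • (2⁻¹ : ℝ) • (a i + b i) := by
        rw [Finset.smul_sum]
        refine Finset.sum_congr rfl fun i _ => ?_
        rw [mul_smul, ← hn i, smul_comm (w i), smul_smul (2 : ℝ)]
        norm_num
      rw [h2, hsum, smul_zero]
    have hcoord : ∀ c : Fin 2,
        ∑ i, (if i ∈ s then w i * ‖a i + b i‖ else 0) * n i c = 0 := by
      intro c
      have := congrArg (fun v : EuclideanSpace ℝ (Fin 2) => v c) hvec
      simpa [ite_mul, Finset.sum_ite_mem] using this
    refine ⟨fun i => if i ∈ s then w i * ‖a i + b i‖ else 0, hx, ?_, hcoord 0, hcoord 1⟩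
    obtain ⟨i, hi, hwi⟩ : ∃ i ∈ s, 0 < w i := by
      by_contra! hc
      have := Finset.sum_nonpos hc
      linarith
    refine Finset.sum_pos' (fun i _ => hx i) ⟨i, Finset.mem_univ i, ?_⟩
    rw [if_pos hi]
    exact mul_pos hwi (hD i)
  rcases hk with rfl | rfl
  · rw [Fin.sum_univ_two] at hxpos hx0 hx1
    exact Or.inl ⟨0, 1, by decide, hOpp 0 1 (by decide)
      (dot_eq_neg_one (hF 0).unit (hF 1).unit (hx 0) (hx 1) hxpos hx0 hx1)⟩
  · rw [Fin.sum_univ_three] at hxpos hx0 hx1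
    have cyc : ∀ i j l : Fin 3, i ≠ j → j ≠ l → l ≠ i → (∀ m, m = i ∨ m = j ∨ m = l) →
        0 < cross2 (n i) (n j) → 0 < cross2 (n j) (n l) → 0 < cross2 (n l) (n i) →
        (∃ i j, i ≠ j ∧ Alternating P r i j) ∨ ∀ i, ∃ j, j ≠ i ∧ RedStar P r i j := by
      intro i j l hij hjl hli hall c1 c2 c3
      rcases alternating_or_star P r hF hne hij hjl hli c1 c2 c3 with
        (h | h | h) | ⟨h1, h2, h3⟩ | ⟨h1, h2, h3⟩
      · exact Or.inl ⟨_, _, hij, h⟩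
      · exact Or.inl ⟨_, _, hjl, h⟩
      · exact Or.inl ⟨_, _, hli, h⟩
      · right
        intro m
        rcases hall m with rfl | rfl | rfl
        · exact ⟨_, hij.symm, h1⟩
        · exact ⟨_, hjl.symm, h2⟩
        · exact ⟨_, hli.symm, h3⟩
      · right
        intro m
        rcases hall m with rfl | rfl | rfl
        · exact ⟨_, hli, h1⟩
        · exact ⟨_, hij, h2⟩
        · exact ⟨_, hjl, h3⟩
    rcases opposite_or_cyclic (hF 0).unit (hF 1).unit (hF 2).unit (hx 0) (hx 1) (hx 2) hxpos hx0
      hx1 with (h | h | h) | ⟨c1, c2, c3⟩ | ⟨c1, c2, c3⟩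
    · exact Or.inl ⟨0, 1, by decide, hOpp 0 1 (by decide) h⟩
    · exact Or.inl ⟨1, 2, by decide, hOpp 1 2 (by decide) h⟩
    · exact Or.inl ⟨2, 0, by decide, hOpp 2 0 (by decide) h⟩
    · exact cyc 0 1 2 (by decide) (by decide) (by decide) (by decide) c1 c2 c3
    · exact cyc 1 0 2 (by decide) (by decide) (by decide) (by decide) c1 c2 c3
end
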